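/- arXiv:math/0507500 — 2 statements merged into one kernel-verified Lean document; each statement's English description precedes it below -/
import Mathlib

section
/- Let P ⊆ ℝ^n be an n-dimensional reflexive polytope with respect to ℤ^n, let Λ = Λ_{n-2} be the subgroup of ℤ^n generated by lattice points in faces of P of dimension at most n-2, let x be a root of P with x ∉ Λ, and let y be a lattice point on the boundary of P with y ∈ Λ and y ∉ F_x. Then ⟨η_x, y⟩ ≥ 1, and the point p(x,y) := ⟨η_x, y⟩·x + y is a root of P, p(x,y) ∉ Λ, and the roots x and p(x,y) are orthogonal, i.e., ⟨η_x, p(x,y)⟩ = 0 = ⟨η_{p(x,y)}, x⟩. -/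
/-!
The bipolar theorem writes `P` as `{z | ⟨u, z⟩ ≥ -1 for all u ∈ V}` for a finite set `V` of lattice
points, and the pairing of two lattice points is an integer.  If two distinct `u, w ∈ P*` take the
value `-1` at a lattice point of `P`, that point lies in a face of codimension at least two.  So at
a root `x ∉ Λ` the normal `η = η_x` is the only `u ∈ P*` with value `-1`, and every other lattice
point of `P*` is nonnegative at `x`.  Therefore `c x + z ∈ P` whenever `z ∈ P` and
`0 ≤ c ≤ ⟨η, z⟩ + 1`.

If `z ∈ P ∩ Λ` is a lattice point with `⟨η, z⟩ = 0`, then `x + z` is again a root outside `Λ` with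
normal `η`; iterating and using that `P` is bounded, `z = 0`.  Applied to `y` this gives
`⟨η, y⟩ ≥ 1`.  Applied to `p = ⟨η, y⟩ x + y` it shows that `p ∈ Λ` would force `p = 0`, and then
`x = -y ∈ Λ` because nonzero lattice points of `P` are primitive.  Finally `⟨u, p⟩ = -1` for some
`u ∈ V`, and `⟨u, y⟩ ≥ -1`, `⟨u, x⟩ ≥ 0` leave only `⟨u, x⟩ = 0`.
-/

/-- The standard pairing `⟨x, y⟩ = ∑ i, x i * y i` on `ℝ^n`. -/
def dotProd {n : ℕ} (x y : Fin n → ℝ) : ℝ := ∑ i, x i * y i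

/-- A point of `ℝ^n` is a lattice point if all its coordinates are integers. -/
def IsLatticePt {n : ℕ} (x : Fin n → ℝ) : Prop := ∀ i, ∃ m : ℤ, x i = (m : ℝ)

/-- A lattice polytope is the convex hull of finitely many lattice points. -/
def IsLatticePolytope {n : ℕ} (P : Set (Fin n → ℝ)) : Prop :=
  ∃ V : Set (Fin n → ℝ), V.Finite ∧ (∀ x ∈ V, IsLatticePt x) ∧ P = convexHull ℝ V

/-- The dual polytope `P* = {y : ⟨x, y⟩ ≥ -1 for all x ∈ P}`. -/
def dualPolytope {n : ℕ} (P : Set (Fin n → ℝ)) : Set (Fin n → ℝ) :=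
  {y | ∀ x ∈ P, -1 ≤ dotProd x y}

/-- A reflexive polytope: a lattice polytope containing `0` in its interior
(hence full-dimensional) whose dual is again a lattice polytope. -/
def IsReflexive {n : ℕ} (P : Set (Fin n → ℝ)) : Prop :=
  IsLatticePolytope P ∧ (0 : Fin n → ℝ) ∈ interior P ∧ IsLatticePolytope (dualPolytope P)

/-- A face of a polytope (an exposed face). -/
def IsFaceOf {n : ℕ} (P F : Set (Fin n → ℝ)) : Prop := IsExposed ℝ P F

/-- A facet: a nonempty face of dimension `n - 1`. -/
def IsFacetOf {n : ℕ} (P F : Set (Fin n → ℝ)) : Prop :=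
  IsFaceOf P F ∧ F.Nonempty ∧ Module.finrank ℝ ↥(vectorSpan ℝ F) = n - 1

/-- `Λ_k` : the subgroup of `ℝ^n` generated by all lattice points lying in faces of `P`
of dimension at most `k` (the `k`-skeleton).  It is a subgroup of the lattice `ℤ^n`. -/
def skeletonLattice {n : ℕ} (P : Set (Fin n → ℝ)) (k : ℕ) : AddSubgroup (Fin n → ℝ) :=
  AddSubgroup.closure
    {x | IsLatticePt x ∧
      ∃ F : Set (Fin n → ℝ), IsFaceOf P F ∧ Module.finrank ℝ ↥(vectorSpan ℝ F) ≤ k ∧ x ∈ F}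

/-- The lattice `ℤ^n`, as the subgroup of `ℝ^n` generated by (= consisting of) all
lattice points. -/
def latticeSubgroup (n : ℕ) : AddSubgroup (Fin n → ℝ) :=
  AddSubgroup.closure {x | IsLatticePt x}

/-- `x` is a (Demazure) root of `P` with facet `F` and inner normal `η`:
`x` is a lattice point in the relative interior of the facet `F`, and `η` is the
lattice point with `⟨η, v⟩ = -1` for all `v ∈ F`. -/
def IsRoot {n : ℕ} (P : Set (Fin n → ℝ)) (x : Fin n → ℝ) (F : Set (Fin n → ℝ))
    (η : Fin n → ℝ) : Prop :=
  IsLatticePt x ∧ IsFacetOf P F ∧ x ∈ intrinsicInterior ℝ F ∧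
    IsLatticePt η ∧ ∀ v ∈ F, dotProd η v = -1

section LinearAlgebra

variable {K E : Type*} [Field K] [AddCommGroup E] [Module K E]

lemma vectorSpan_le_ker {f : Module.Dual K E} {s : Set E} {c : K} (h : ∀ v ∈ s, f v = c) :
    vectorSpan K s ≤ LinearMap.ker f := by
  rw [vectorSpan_def, Submodule.span_le]
  rintro _ ⟨a, ha, b, hb, rfl⟩
  change f (a - b) = 0
  rw [map_sub, h a ha, h b hb, sub_self]

lemma exists_smul_eq_of_ker_le_ker {f g : Module.Dual K E}
    (h : LinearMap.ker g ≤ LinearMap.ker f) : ∃ c : K, c • g = f := by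
  have hf : f ∈ Submodule.span K (Set.range fun _ : Unit => g) :=
    mem_span_of_iInf_ker_le_ker (by rwa [iInf_const])
  rwa [Set.range_const, Submodule.mem_span_singleton] at hf

lemma finrank_ker_inf_ker_add_two_le [FiniteDimensional K E] {f g : Module.Dual K E} {z : E}
    (hfg : f ≠ g) (hz : f z = g z) (hfz : f z ≠ 0) :
    Module.finrank K ↥(LinearMap.ker f ⊓ LinearMap.ker g) + 2 ≤ Module.finrank K E := by
  have hf : Module.finrank K (LinearMap.ker f) + 1 = Module.finrank K E :=
    Module.Dual.finrank_ker_add_one_of_ne_zero fun h => hfz (by rw [h, LinearMap.zero_apply])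
  have hg : Module.finrank K (LinearMap.ker g) + 1 = Module.finrank K E :=
    Module.Dual.finrank_ker_add_one_of_ne_zero fun h =>
      hfz (by rw [hz, h, LinearMap.zero_apply])
  have hlt : LinearMap.ker f ⊓ LinearMap.ker g < LinearMap.ker f := by
    refine inf_lt_left.2 fun hle => hfg ?_
    have hker := Submodule.eq_of_le_of_finrank_eq hle (by omega)
    exact Module.Dual.eq_of_ker_eq_of_apply_eq z hker hz hfz
  have := Submodule.finrank_lt_finrank_of_lt hlt
  omega

end LinearAlgebra

lemma mem_intrinsicInterior_of_mem_interior {𝕜 V P : Type*} [Ring 𝕜] [AddCommGroup V]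
    [Module 𝕜 V] [TopologicalSpace P] [AddTorsor V P] {s t : Set P} {x : P} (hxs : x ∈ s)
    (hxt : x ∈ interior t) (h : t ∩ affineSpan 𝕜 s ⊆ s) : x ∈ intrinsicInterior 𝕜 s :=
  mem_intrinsicInterior.2 ⟨⟨x, subset_affineSpan 𝕜 s hxs⟩,
    interior_mono (fun (v : affineSpan 𝕜 s) hv => h ⟨hv, v.2⟩)
      (preimage_interior_subset_interior_preimage continuous_subtype_val hxt), rfl⟩

lemma eq_zero_of_forall_add_nsmul_mem {E : Type*} [NormedAddCommGroup E] [NormedSpace ℝ E]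
    {s : Set E} (hs : Bornology.IsBounded s) {x z : E} (h : ∀ j : ℕ, x + j • z ∈ s) : z = 0 := by
  by_contra hz
  obtain ⟨C, hC⟩ := Metric.isBounded_iff.1 hs
  obtain ⟨j, hj⟩ := exists_lt_nsmul (norm_pos_iff.2 hz) C
  have hdist : dist (x + j • z) (x + 0 • z) = j • ‖z‖ := by
    rw [zero_nsmul, add_zero, dist_self_add_left, RCLike.norm_nsmul ℝ]
  exact hj.not_ge (hdist ▸ hC (h j) (h 0))

section

variable {n : ℕ}

section Pairing

variable (u v w : Fin n → ℝ)

/-- The identification `u ↦ ⟨u, ·⟩` of `ℝ^n` with its linear dual. -/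
def dotProdEquiv (n : ℕ) : (Fin n → ℝ) ≃ₗ[ℝ] Module.Dual ℝ (Fin n → ℝ) :=
  dotProductEquiv ℝ (Fin n)

@[simp]
lemma dotProdEquiv_apply : dotProdEquiv n u v = dotProd u v := rfl

lemma dotProd_comm : dotProd u v = dotProd v u := dotProduct_comm u v

lemma dotProd_add : dotProd u (v + w) = dotProd u v + dotProd u w := dotProduct_add u v w

lemma dotProd_smul (c : ℝ) : dotProd u (c • v) = c * dotProd u v := dotProduct_smul c u v

lemma dotProd_smul_add (c : ℝ) : dotProd u (c • v + w) = c * dotProd u v + dotProd u w := by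
  rw [dotProd_add, dotProd_smul]

lemma dotProd_zero : dotProd u 0 = 0 := dotProduct_zero u

lemma continuous_dotProd : Continuous (dotProd u) :=
  (dotProdEquiv n u).continuous_of_finiteDimensional

end Pairing

section LatticePoints

variable {u v : Fin n → ℝ}

lemma IsLatticePt.add (hu : IsLatticePt u) (hv : IsLatticePt v) : IsLatticePt (u + v) := fun i => by
  obtain ⟨a, ha⟩ := hu i
  obtain ⟨b, hb⟩ := hv i
  exact ⟨a + b, by rw [Pi.add_apply, ha, hb, Int.cast_add]⟩

lemma IsLatticePt.intCast_smul (hv : IsLatticePt v) (k : ℤ) : IsLatticePt ((k : ℝ) • v) :=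
  fun i => by
    obtain ⟨b, hb⟩ := hv i
    exact ⟨k * b, by rw [Pi.smul_apply, hb, smul_eq_mul, Int.cast_mul]⟩

lemma IsLatticePt.exists_dotProd_eq_intCast (hu : IsLatticePt u) (hv : IsLatticePt v) :
    ∃ m : ℤ, dotProd u v = m := by
  choose a ha using hu
  choose b hb using hv
  exact ⟨∑ i, a i * b i, by simp only [dotProd, ha, hb, Int.cast_sum, Int.cast_mul]⟩

lemma IsLatticePt.dotProd_nonneg_of_ne_neg_one (hu : IsLatticePt u) (hv : IsLatticePt v)
    (h : -1 ≤ dotProd u v) (hne : dotProd u v ≠ -1) : 0 ≤ dotProd u v := by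
  obtain ⟨m, hm⟩ := hu.exists_dotProd_eq_intCast hv
  rw [hm] at h hne ⊢
  norm_cast at h hne ⊢
  omega

end LatticePoints

section Duality

variable {P V : Set (Fin n → ℝ)} {u z : Fin n → ℝ}

lemma neg_one_le_dotProd (hu : u ∈ dualPolytope P) (hz : z ∈ P) : -1 ≤ dotProd u z :=
  dotProd_comm z u ▸ hu z hz

lemma subset_dualPolytope_dualPolytope (P : Set (Fin n → ℝ)) :
    P ⊆ dualPolytope (dualPolytope P) :=
  fun _ hz _ hu => neg_one_le_dotProd hu hz

lemma isClosed_dualPolytope (P : Set (Fin n → ℝ)) : IsClosed (dualPolytope P) := by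
  simp only [dualPolytope, Set.ofPred_forall]
  exact isClosed_biInter fun u _ => isClosed_le continuous_const (continuous_dotProd u)

lemma convex_dualPolytope (P : Set (Fin n → ℝ)) : Convex ℝ (dualPolytope P) := by
  simp only [dualPolytope, Set.ofPred_forall]
  exact convex_iInter₂ fun u _ => convex_halfSpace_ge (dotProdEquiv n u).isLinear (-1)

lemma dualPolytope_convexHull (V : Set (Fin n → ℝ)) :
    dualPolytope (convexHull ℝ V) = dualPolytope V := by
  refine Set.Subset.antisymm (fun z hz u hu => hz u (subset_convexHull ℝ V hu)) fun z hz => ?_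
  have hV : convexHull ℝ V ⊆ dualPolytope {z} :=
    convexHull_min (fun u hu => by rintro _ rfl; exact neg_one_le_dotProd hz hu)
      (convex_dualPolytope {z})
  exact fun u hu => neg_one_le_dotProd (hV hu) rfl

lemma dualPolytope_dualPolytope (hc : Convex ℝ P) (hcl : IsClosed P) (h0 : 0 ∈ P) :
    dualPolytope (dualPolytope P) = P := by
  refine Set.Subset.antisymm (fun z hz => ?_) (subset_dualPolytope_dualPolytope P)
  by_contra hzP
  obtain ⟨f, s, hfs, hsz⟩ := geometric_hahn_banach_closed_point hc hcl hzP
  have hs : 0 < s := by simpa only [map_zero] using hfs 0 h0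
  -- The separating functional is rescaled so that the level `s` becomes `-1`.
  obtain ⟨u, hu⟩ := (dotProdEquiv n).surjective (-s⁻¹ • (f : (Fin n → ℝ) →ₗ[ℝ] ℝ))
  have huv : ∀ v, dotProd u v = -s⁻¹ * f v := fun v => DFunLike.congr_fun hu v
  have hneg_one : ∀ v, -1 ≤ dotProd u v ↔ f v ≤ s := fun v => by
    rw [huv, neg_mul, neg_le_neg_iff, inv_mul_le_iff₀ hs, mul_one]
  have hud : u ∈ dualPolytope P := fun v hv =>
    dotProd_comm u v ▸ (hneg_one v).2 (hfs v hv).le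
  exact ((hneg_one z).1 (hz u hud)).not_gt hsz

lemma mem_interior_dualPolytope (hV : V.Finite) (h : ∀ u ∈ V, -1 < dotProd u z) :
    z ∈ interior (dualPolytope V) := by
  refine mem_interior.2 ⟨⋂ u ∈ V, {v | -1 < dotProd u v}, fun v hv u hu => ?_, ?_, ?_⟩
  · exact (Set.mem_iInter₂.1 hv u hu).le
  · exact hV.isOpen_biInter fun u _ => isOpen_lt continuous_const (continuous_dotProd u)
  · exact Set.mem_iInter₂.2 h

lemma zero_mem_interior_dualPolytope (hV : V.Finite) : 0 ∈ interior (dualPolytope V) :=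
  mem_interior_dualPolytope hV fun u _ => by rw [dotProd_zero]; norm_num

lemma exists_dotProd_eq_neg_one (hVl : ∀ u ∈ V, IsLatticePt u)
    (hb : Bornology.IsBounded (dualPolytope V)) (hz : z ∈ dualPolytope V) (hzl : IsLatticePt z)
    (hz0 : z ≠ 0) : ∃ u ∈ V, dotProd u z = -1 := by
  by_contra! hne
  have hnonneg : ∀ u ∈ V, 0 ≤ dotProd u z := fun u hu =>
    (hVl u hu).dotProd_nonneg_of_ne_neg_one hzl (hz u hu) (hne u hu)
  refine hz0 (eq_zero_of_forall_add_nsmul_mem hb (x := 0) fun j u hu => ?_)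
  rw [zero_add, ← Nat.cast_smul_eq_nsmul ℝ, dotProd_smul]
  linarith [mul_nonneg j.cast_nonneg (hnonneg u hu)]

lemma isUnit_of_intCast_smul_mem_dualPolytope (hVl : ∀ u ∈ V, IsLatticePt u)
    (hb : Bornology.IsBounded (dualPolytope V)) (hzl : IsLatticePt z) {k : ℤ}
    (hz : (k : ℝ) • z ∈ dualPolytope V) (hz0 : (k : ℝ) • z ≠ 0) : IsUnit k := by
  obtain ⟨u, hu, huz⟩ := exists_dotProd_eq_neg_one hVl hb hz (hzl.intCast_smul k) hz0
  obtain ⟨m, hm⟩ := (hVl u hu).exists_dotProd_eq_intCast hzl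
  rw [dotProd_smul, hm] at huz
  have hkm : k * m = -1 := by exact_mod_cast huz
  exact IsUnit.of_mul_eq_one (-m) (by rw [mul_neg, hkm, neg_neg])

end Duality

section Faces

variable {P F : Set (Fin n → ℝ)} {u w z η : Fin n → ℝ}

/-- The face of `P` cut out by a point `u` of the dual polytope. -/
def dualFace (P : Set (Fin n → ℝ)) (u : Fin n → ℝ) : Set (Fin n → ℝ) :=
  {v ∈ P | dotProd u v = -1}

lemma isFaceOf_dualFace (hu : u ∈ dualPolytope P) : IsFaceOf P (dualFace P u) := by
  rintro ⟨z, hz, huz⟩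
  refine ⟨-(dotProdEquiv n u).toContinuousLinearMap, Set.ext fun v => and_congr_right fun hv => ?_⟩
  simp only [neg_apply, LinearMap.coe_toContinuousLinearMap', dotProdEquiv_apply, neg_le_neg_iff]
  exact ⟨fun h w hw => h ▸ neg_one_le_dotProd hu hw,
    fun h => le_antisymm (huz ▸ h z hz) (neg_one_le_dotProd hu hv)⟩

lemma vectorSpan_dualFace_le_ker (P : Set (Fin n → ℝ)) (u : Fin n → ℝ) :
    vectorSpan ℝ (dualFace P u) ≤ LinearMap.ker (dotProdEquiv n u) :=
  vectorSpan_le_ker fun _ hv => hv.2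

lemma finrank_ker_dotProdEquiv_add_one (hu : u ≠ 0) :
    Module.finrank ℝ (LinearMap.ker (dotProdEquiv n u)) + 1 = n := by
  rw [Module.Dual.finrank_ker_add_one_of_ne_zero ((dotProdEquiv n).map_ne_zero_iff.2 hu),
    Module.finrank_fin_fun]

lemma ne_zero_of_dotProd_eq_neg_one (h : dotProd u z = -1) : u ≠ 0 := by
  rintro rfl
  rw [dotProd_comm, dotProd_zero] at h
  norm_num at h

lemma mem_skeletonLattice_of_mem_dualFace (hu : u ∈ dualPolytope P) (hw : w ∈ dualPolytope P)
    (huw : u ≠ w) (hzl : IsLatticePt z) (hzu : z ∈ dualFace P u) (hzw : z ∈ dualFace P w) :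
    z ∈ skeletonLattice P (n - 2) := by
  have hface : IsFaceOf P (dualFace P u ∩ dualFace P w) :=
    (isFaceOf_dualFace hu).inter (isFaceOf_dualFace hw)
  have hspan : vectorSpan ℝ (dualFace P u ∩ dualFace P w) ≤
      LinearMap.ker (dotProdEquiv n u) ⊓ LinearMap.ker (dotProdEquiv n w) :=
    le_inf ((vectorSpan_mono ℝ Set.inter_subset_left).trans (vectorSpan_dualFace_le_ker P u))
      ((vectorSpan_mono ℝ Set.inter_subset_right).trans (vectorSpan_dualFace_le_ker P w))
  have hker := finrank_ker_inf_ker_add_two_le (z := z) ((dotProdEquiv n).injective.ne huw)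
    (hzu.2.trans hzw.2.symm) (by rw [dotProdEquiv_apply, hzu.2]; norm_num)
  rw [Module.finrank_fin_fun] at hker
  exact AddSubgroup.subset_closure ⟨hzl, _, hface,
    (Submodule.finrank_mono hspan).trans (Nat.le_sub_of_add_le hker), hzu, hzw⟩

lemma isFacetOf_dualFace (hu : u ∈ dualPolytope P) (hzl : IsLatticePt z) (hz : z ∈ dualFace P u)
    (hzΛ : z ∉ skeletonLattice P (n - 2)) : IsFacetOf P (dualFace P u) := by
  have hface := isFaceOf_dualFace hu
  refine ⟨hface, ⟨z, hz⟩, ?_⟩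
  have hlow : ¬ Module.finrank ℝ (vectorSpan ℝ (dualFace P u)) ≤ n - 2 := fun h =>
    hzΛ (AddSubgroup.subset_closure ⟨hzl, _, hface, h, hz⟩)
  have hupp := Submodule.finrank_mono (vectorSpan_dualFace_le_ker P u)
  have hker := finrank_ker_dotProdEquiv_add_one (ne_zero_of_dotProd_eq_neg_one hz.2)
  omega

lemma IsFacetOf.vectorSpan_eq_ker (hF : IsFacetOf P F) (hη : ∀ v ∈ F, dotProd η v = -1) :
    vectorSpan ℝ F = LinearMap.ker (dotProdEquiv n η) := by
  obtain ⟨-, ⟨x, hx⟩, hdim⟩ := hF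
  have hker := finrank_ker_dotProdEquiv_add_one (ne_zero_of_dotProd_eq_neg_one (hη x hx))
  exact Submodule.eq_of_le_of_finrank_eq (vectorSpan_le_ker hη) (by omega)

lemma IsFacetOf.eq_setOf_forall_dotProd_le (h0 : 0 ∈ P) (hF : IsFacetOf P F)
    (hη : ∀ v ∈ F, dotProd η v = -1) :
    F = {v ∈ P | ∀ w ∈ P, dotProd η v ≤ dotProd η w} := by
  obtain ⟨l, hl⟩ := hF.1 hF.2.1
  obtain ⟨x, hx⟩ := hF.2.1
  have hmax : ∀ v ∈ F, ∀ w ∈ P, l w ≤ l v := fun v hv => (hl ▸ hv).2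
  have hspan : vectorSpan ℝ F ≤ LinearMap.ker (l : (Fin n → ℝ) →ₗ[ℝ] ℝ) :=
    vectorSpan_le_ker (c := l x) fun v hv =>
      le_antisymm (hmax x hx v (hF.1.subset hv)) (hmax v hv x (hF.1.subset hx))
  obtain ⟨c, hc⟩ := exists_smul_eq_of_ker_le_ker (hF.vectorSpan_eq_ker hη ▸ hspan)
  have hlc : ∀ v, l v = c * dotProd η v := fun v => (DFunLike.congr_fun hc v).symm
  have hc_nonpos : c ≤ 0 := by
    have := hmax x hx 0 h0
    rw [map_zero, hlc, hη x hx] at this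
    linarith
  have hc_ne : c ≠ 0 := by
    rintro rfl
    have h0F : (0 : Fin n → ℝ) ∈ F := by
      rw [hl]
      exact ⟨h0, fun w _ => by rw [hlc, hlc, zero_mul, zero_mul]⟩
    have := hη 0 h0F
    rw [dotProd_zero] at this
    norm_num at this
  rw [hl]
  simp only [hlc, mul_le_mul_left_of_neg (hc_nonpos.lt_of_ne hc_ne)]

lemma IsFacetOf.normal_mem_dualPolytope (h0 : 0 ∈ P) (hF : IsFacetOf P F)
    (hη : ∀ v ∈ F, dotProd η v = -1) : η ∈ dualPolytope P := by
  obtain ⟨x, hx⟩ := hF.2.1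
  intro v hv
  have hmin := (hF.eq_setOf_forall_dotProd_le h0 hη ▸ hx).2 v hv
  rwa [hη x hx, dotProd_comm] at hmin

lemma IsFacetOf.eq_dualFace (h0 : 0 ∈ P) (hF : IsFacetOf P F)
    (hη : ∀ v ∈ F, dotProd η v = -1) : F = dualFace P η := by
  refine Set.Subset.antisymm (fun v hv => ⟨hF.1.subset hv, hη v hv⟩) fun v hv => ?_
  rw [hF.eq_setOf_forall_dotProd_le h0 hη]
  exact ⟨hv.1, fun w hw => hv.2 ▸ neg_one_le_dotProd (hF.normal_mem_dualPolytope h0 hη) hw⟩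

lemma mem_intrinsicInterior_dualFace {V : Set (Fin n → ℝ)} (hV : V.Finite)
    (hz : z ∈ dualFace (dualPolytope V) u) (h : ∀ w ∈ V, w ≠ u → -1 < dotProd w z) :
    z ∈ intrinsicInterior ℝ (dualFace (dualPolytope V) u) := by
  refine mem_intrinsicInterior_of_mem_interior hz
    (mem_interior_dualPolytope (hV.subset Set.sdiff_subset) fun w hw => h w hw.1 hw.2) ?_
  rintro v ⟨hv, hvF⟩
  have huv : dotProd u v = -1 :=
    AffineMap.eqOn_affineSpan (f := (dotProdEquiv n u).toAffineMap)
      (g := AffineMap.const ℝ (Fin n → ℝ) (-1)) (fun _ hw => hw.2) hvF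
  refine ⟨fun w hw => ?_, huv⟩
  rcases eq_or_ne w u with rfl | hwu
  · exact huv.ge
  · exact hv w ⟨hw, hwu⟩

end Faces

/-- A root `x` of `P` outside `Λ = Λ_{n-2}` with normal `η`.  The facet is left implicit: it is
`dualFace P η`, and `x ∉ Λ` already forces it to be a facet with `x` in its relative interior when
`P` is the dual of a finite set of lattice points (`IsRootOffSkeleton.isRoot`). -/
structure IsRootOffSkeleton (P : Set (Fin n → ℝ)) (x η : Fin n → ℝ) : Prop where
  mem : x ∈ P
  isLatticePt : IsLatticePt x
  notMem_skeletonLattice : x ∉ skeletonLattice P (n - 2)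
  normal_mem : η ∈ dualPolytope P
  isLatticePt_normal : IsLatticePt η
  dotProd_normal : dotProd η x = -1

lemma IsRoot.isRootOffSkeleton {P F : Set (Fin n → ℝ)} {x η : Fin n → ℝ} (h : IsRoot P x F η)
    (h0 : 0 ∈ P) (hxΛ : x ∉ skeletonLattice P (n - 2)) : IsRootOffSkeleton P x η := by
  obtain ⟨hxl, hF, hxF, hηl, hη⟩ := h
  have hx := intrinsicInterior_subset hxF
  exact ⟨hF.1.subset hx, hxl, hxΛ, hF.normal_mem_dualPolytope h0 hη, hηl, hη x hx⟩

namespace IsRootOffSkeleton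

lemma dotProd_nonneg {P : Set (Fin n → ℝ)} {x η u : Fin n → ℝ} (hx : IsRootOffSkeleton P x η)
    (hu : u ∈ dualPolytope P) (hul : IsLatticePt u) (huη : u ≠ η) : 0 ≤ dotProd u x := by
  have hne : dotProd u x ≠ -1 := fun h => hx.notMem_skeletonLattice <|
    mem_skeletonLattice_of_mem_dualFace hu hx.normal_mem huη hx.isLatticePt ⟨hx.mem, h⟩
      ⟨hx.mem, hx.dotProd_normal⟩
  exact hul.dotProd_nonneg_of_ne_neg_one hx.isLatticePt (neg_one_le_dotProd hu hx.mem) hne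

lemma dotProd_normal_smul_add {P : Set (Fin n → ℝ)} {x η : Fin n → ℝ}
    (hx : IsRootOffSkeleton P x η) (y : Fin n → ℝ) : dotProd η (dotProd η y • x + y) = 0 := by
  rw [dotProd_smul_add, hx.dotProd_normal]
  ring

lemma isLatticePt_smul_add {P : Set (Fin n → ℝ)} {x η y : Fin n → ℝ}
    (hx : IsRootOffSkeleton P x η) (hy : IsLatticePt y) :
    IsLatticePt (dotProd η y • x + y) := by
  obtain ⟨k, hk⟩ := hx.isLatticePt_normal.exists_dotProd_eq_intCast hy
  exact hk ▸ (hx.isLatticePt.intCast_smul k).add hy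

lemma dotProd_eq_zero_of_smul_add {P : Set (Fin n → ℝ)} {x η y u : Fin n → ℝ}
    (hx : IsRootOffSkeleton P x η) (hy : y ∈ P) (hηy : 0 < dotProd η y)
    (hu : u ∈ dualPolytope P) (hul : IsLatticePt u)
    (hup : dotProd u (dotProd η y • x + y) = -1) : dotProd u x = 0 := by
  have huη : u ≠ η := by
    rintro rfl
    rw [hx.dotProd_normal_smul_add] at hup
    norm_num at hup
  have hux := hx.dotProd_nonneg hu hul huη
  have huy := neg_one_le_dotProd hu hy
  rw [dotProd_smul_add] at hup
  exact le_antisymm (nonpos_of_mul_nonpos_right (by linarith) hηy) hux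

variable {V : Set (Fin n → ℝ)} {x η y z : Fin n → ℝ}

lemma isRoot (hV : V.Finite) (hVl : ∀ u ∈ V, IsLatticePt u)
    (hx : IsRootOffSkeleton (dualPolytope V) x η) :
    IsRoot (dualPolytope V) x (dualFace (dualPolytope V) η) η := by
  have hxF : x ∈ dualFace (dualPolytope V) η := ⟨hx.mem, hx.dotProd_normal⟩
  refine ⟨hx.isLatticePt,
    isFacetOf_dualFace hx.normal_mem hx.isLatticePt hxF hx.notMem_skeletonLattice,
    mem_intrinsicInterior_dualFace hV hxF fun w hw hwη => ?_, hx.isLatticePt_normal,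
    fun v hv => hv.2⟩
  linarith [hx.dotProd_nonneg (subset_dualPolytope_dualPolytope V hw) (hVl w hw) hwη]

lemma smul_add_mem (hVl : ∀ u ∈ V, IsLatticePt u)
    (hx : IsRootOffSkeleton (dualPolytope V) x η) (hz : z ∈ dualPolytope V) {c : ℝ} (hc : 0 ≤ c)
    (hcz : c ≤ dotProd η z + 1) : c • x + z ∈ dualPolytope V := by
  intro u hu
  rw [dotProd_smul_add]
  rcases eq_or_ne u η with rfl | huη
  · rw [hx.dotProd_normal]
    linarith
  · have hux := hx.dotProd_nonneg (subset_dualPolytope_dualPolytope V hu) (hVl u hu) huη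
    linarith [mul_nonneg hc hux, hz u hu]

lemma add (hVl : ∀ u ∈ V, IsLatticePt u) (hx : IsRootOffSkeleton (dualPolytope V) x η)
    (hz : z ∈ dualPolytope V) (hzl : IsLatticePt z)
    (hzΛ : z ∈ skeletonLattice (dualPolytope V) (n - 2)) (hηz : dotProd η z = 0) :
    IsRootOffSkeleton (dualPolytope V) (x + z) η where
  mem := by simpa only [one_smul] using hx.smul_add_mem hVl hz zero_le_one (by rw [hηz, zero_add])
  isLatticePt := hx.isLatticePt.add hzl
  notMem_skeletonLattice := (add_mem_cancel_right hzΛ).not.2 hx.notMem_skeletonLattice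
  normal_mem := hx.normal_mem
  isLatticePt_normal := hx.isLatticePt_normal
  dotProd_normal := by rw [dotProd_add, hx.dotProd_normal, hηz, add_zero]

lemma eq_zero_of_dotProd_eq_zero (hVl : ∀ u ∈ V, IsLatticePt u)
    (hb : Bornology.IsBounded (dualPolytope V)) (hx : IsRootOffSkeleton (dualPolytope V) x η)
    (hz : z ∈ dualPolytope V) (hzl : IsLatticePt z)
    (hzΛ : z ∈ skeletonLattice (dualPolytope V) (n - 2)) (hηz : dotProd η z = 0) : z = 0 := by
  have hroot : ∀ j : ℕ, IsRootOffSkeleton (dualPolytope V) (x + j • z) η := fun j => by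
    induction j with
    | zero => rwa [zero_nsmul, add_zero]
    | succ j ih => rw [succ_nsmul, ← add_assoc]; exact ih.add hVl hz hzl hzΛ hηz
  exact eq_zero_of_forall_add_nsmul_mem hb fun j => (hroot j).mem

lemma one_le_dotProd (hVl : ∀ u ∈ V, IsLatticePt u) (hb : Bornology.IsBounded (dualPolytope V))
    (hx : IsRootOffSkeleton (dualPolytope V) x η) (hy : y ∈ dualPolytope V) (hyl : IsLatticePt y)
    (hyΛ : y ∈ skeletonLattice (dualPolytope V) (n - 2)) (hy0 : y ≠ 0)
    (hyη : dotProd η y ≠ -1) : 1 ≤ dotProd η y := by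
  have hne : dotProd η y ≠ 0 := fun h =>
    hy0 (hx.eq_zero_of_dotProd_eq_zero hVl hb hy hyl hyΛ h)
  have hge := neg_one_le_dotProd hx.normal_mem hy
  obtain ⟨k, hk⟩ := hx.isLatticePt_normal.exists_dotProd_eq_intCast hyl
  rw [hk] at hge hyη hne ⊢
  norm_cast at hge hyη hne ⊢
  omega

lemma smul_add_notMem_skeletonLattice (hVl : ∀ u ∈ V, IsLatticePt u)
    (hb : Bornology.IsBounded (dualPolytope V)) (hx : IsRootOffSkeleton (dualPolytope V) x η)
    (hy : y ∈ dualPolytope V) (hyl : IsLatticePt y)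
    (hyΛ : y ∈ skeletonLattice (dualPolytope V) (n - 2)) (hηy : 0 < dotProd η y) :
    dotProd η y • x + y ∉ skeletonLattice (dualPolytope V) (n - 2) := by
  intro hpΛ
  have hp : dotProd η y • x + y = 0 :=
    hx.eq_zero_of_dotProd_eq_zero hVl hb (hx.smul_add_mem hVl hy hηy.le (by linarith))
      (hx.isLatticePt_smul_add hyl) hpΛ (hx.dotProd_normal_smul_add y)
  obtain ⟨k, hk⟩ := hx.isLatticePt_normal.exists_dotProd_eq_intCast hyl
  have hy_eq : ((-k : ℤ) : ℝ) • x = y := by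
    rw [Int.cast_neg, ← hk, neg_smul, ← eq_neg_of_add_eq_zero_right hp]
  have hy0 : y ≠ 0 := by
    rintro rfl
    exact hηy.ne' (dotProd_zero η)
  have hunit : IsUnit (-k) := isUnit_of_intCast_smul_mem_dualPolytope hVl hb hx.isLatticePt
    (hy_eq ▸ hy) (hy_eq ▸ hy0)
  have hk_pos : 0 < k := by exact_mod_cast hk ▸ hηy
  have hk_one : k = 1 := (Int.isUnit_iff.1 hunit).elim (by omega) (by omega)
  have hxy : x = -y := by rw [← hy_eq, hk_one]; simp
  exact hx.notMem_skeletonLattice (hxy ▸ neg_mem hyΛ)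

end IsRootOffSkeleton

lemma IsReflexive.exists_eq_dualPolytope {P : Set (Fin n → ℝ)} (hP : IsReflexive P) :
    ∃ V : Set (Fin n → ℝ), V.Finite ∧ (∀ u ∈ V, IsLatticePt u) ∧
      Bornology.IsBounded (dualPolytope V) ∧ P = dualPolytope V := by
  obtain ⟨⟨W, hW, -, hPW⟩, h0, V, hV, hVl, hPV⟩ := hP
  have hcomp : IsCompact P := hPW ▸ hW.isCompact_convexHull ℝ
  have hPdual : P = dualPolytope V := by
    rw [← dualPolytope_convexHull, ← hPV, dualPolytope_dualPolytope (hPW ▸ convex_convexHull ℝ W)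
      hcomp.isClosed (interior_subset h0)]
  exact ⟨V, hV, hVl, hPdual ▸ hcomp.isBounded, hPdual⟩

/-- The corollary for the polar of an arbitrary lattice polytope `conv V`: the vertices of the
bounded polytope `dualPolytope V` may be non-integral. -/
theorem corollary_tool_general {V : Set (Fin n → ℝ)} (hV : V.Finite)
    (hVl : ∀ u ∈ V, IsLatticePt u) (hb : Bornology.IsBounded (dualPolytope V))
    {x ηx : Fin n → ℝ} {Fx : Set (Fin n → ℝ)} (hroot : IsRoot (dualPolytope V) x Fx ηx)
    (hxΛ : x ∉ skeletonLattice (dualPolytope V) (n - 2))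
    {y : Fin n → ℝ} (hy : IsLatticePt y) (hyb : y ∈ frontier (dualPolytope V))
    (hyΛ : y ∈ skeletonLattice (dualPolytope V) (n - 2)) (hyF : y ∉ Fx) :
    1 ≤ dotProd ηx y ∧
    (dotProd ηx y • x + y) ∉ skeletonLattice (dualPolytope V) (n - 2) ∧
    ∃ Fp ηp : _, IsRoot (dualPolytope V) (dotProd ηx y • x + y) Fp ηp ∧
      dotProd ηx (dotProd ηx y • x + y) = 0 ∧ dotProd ηp x = 0 := by
  have h0 := zero_mem_interior_dualPolytope hV
  have hx := hroot.isRootOffSkeleton (interior_subset h0) hxΛ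
  have hyP : y ∈ dualPolytope V := (isClosed_dualPolytope V).frontier_subset hyb
  have hyη : dotProd ηx y ≠ -1 := fun h =>
    hyF (hroot.2.1.eq_dualFace (interior_subset h0) hroot.2.2.2.2 ▸ ⟨hyP, h⟩)
  have hk : 1 ≤ dotProd ηx y :=
    hx.one_le_dotProd hVl hb hyP hy hyΛ (fun h => hyb.2 (h ▸ h0)) hyη
  have hk_pos : 0 < dotProd ηx y := one_pos.trans_le hk
  have hpP := hx.smul_add_mem hVl hyP hk_pos.le (by linarith)
  have hpl := hx.isLatticePt_smul_add hy
  have hpΛ := hx.smul_add_notMem_skeletonLattice hVl hb hyP hy hyΛ hk_pos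
  obtain ⟨u, hu, hup⟩ :=
    exists_dotProd_eq_neg_one hVl hb hpP hpl fun h => hpΛ (h ▸ zero_mem _)
  have hud := subset_dualPolytope_dualPolytope V hu
  have hp : IsRootOffSkeleton (dualPolytope V) (dotProd ηx y • x + y) u :=
    ⟨hpP, hpl, hpΛ, hud, hVl u hu, hup⟩
  exact ⟨hk, hpΛ, _, u, hp.isRoot hV hVl, hx.dotProd_normal_smul_add y,
    hx.dotProd_eq_zero_of_smul_add hyP hk_pos hud (hVl u hu) hup⟩

end

/-- **(Corollary)** Let `Λ = Λ_{n-2}`, let `x` be a root of `P` (facet `Fₓ`, inner normal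
`ηₓ`) with `x ∉ Λ`, and let `y ∈ Λ` be a boundary lattice point with `y ∉ Fₓ`.  Then
`⟨ηₓ, y⟩ ≥ 1` and `p(x,y) = ⟨ηₓ, y⟩·x + y` is a root not in `Λ` which is orthogonal to
`x`, i.e. `⟨ηₓ, p(x,y)⟩ = 0 = ⟨η_{p(x,y)}, x⟩`. -/
theorem corollary_tool {n : ℕ} (P : Set (Fin n → ℝ)) (hP : IsReflexive P)
    (x Fx ηx : _) (hroot : IsRoot P x Fx ηx)
    (hxΛ : x ∉ skeletonLattice P (n - 2))
    (y : Fin n → ℝ) (hy : IsLatticePt y) (hyb : y ∈ frontier P)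
    (hyΛ : y ∈ skeletonLattice P (n - 2)) (hyF : y ∉ Fx) :
    1 ≤ dotProd ηx y ∧
    (dotProd ηx y • x + y) ∉ skeletonLattice P (n - 2) ∧
    ∃ Fp ηp : _, IsRoot P (dotProd ηx y • x + y) Fp ηp ∧
      dotProd ηx (dotProd ηx y • x + y) = 0 ∧ dotProd ηp x = 0 := by
  obtain ⟨V, hV, hVl, hb, rfl⟩ := hP.exists_eq_dualPolytope
  exact corollary_tool_general hV hVl hb hroot hxΛ hy hyb hyΛ hyF
end

section
/- Let Q ⊆ ℝ² be a reflexive polygon with respect to ℤ². Then the lattice points of ℤ² lying on the boundary of Q generate the full lattice ℤ², i.e., Λ_1 = ℤ². -/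
open Module Submodule Topology

section Plane

variable {𝕜 E : Type*} [Field 𝕜] [LinearOrder 𝕜] [IsStrictOrderedRing 𝕜]
  [AddCommGroup E] [Module 𝕜 E] {L : AddSubgroup E} {Q : Set E}

lemma smul_add_smul_mem_of_convex_of_zero_mem (hQ : Convex 𝕜 Q) (h0 : 0 ∈ Q) {a b : E}
    (ha : a ∈ Q) (hb : b ∈ Q) {s t : 𝕜} (hs : 0 ≤ s) (ht : 0 ≤ t) (hst : s + t ≤ 1) :
    s • a + t • b ∈ Q := by
  obtain ⟨c, hc, hsum⟩ := hQ.exists_mem_add_smul_eq ha hb hs ht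
  exact hsum ▸ hQ.smul_mem_of_zero_mem h0 hc ⟨add_nonneg hs ht, hst⟩

variable [FloorRing 𝕜]

lemma smul_add_smul_mem_closure_inter (hQ : Convex 𝕜 Q) (h0 : 0 ∈ Q) {a b : E}
    (ha : a ∈ (L : Set E) ∩ Q) (hb : b ∈ (L : Set E) ∩ Q) {s t : 𝕜} (hp : s • a + t • b ∈ L) :
    s • a + t • b ∈ AddSubgroup.closure ((L : Set E) ∩ Q) := by
  set G := AddSubgroup.closure ((L : Set E) ∩ Q)
  have haG : a ∈ G := AddSubgroup.subset_closure ha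
  have hbG : b ∈ G := AddSubgroup.subset_closure hb
  set q := Int.fract s • a + Int.fract t • b with hq
  have hpq : s • a + t • b = ⌊s⌋ • a + ⌊t⌋ • b + q := by
    rw [hq, ← Int.cast_smul_eq_zsmul 𝕜 ⌊s⌋, ← Int.cast_smul_eq_zsmul 𝕜 ⌊t⌋, Int.fract, Int.fract]
    module
  have hqL : q ∈ L := by
    rw [hpq] at hp
    exact (add_mem_cancel_left (add_mem (zsmul_mem ha.1 _) (zsmul_mem hb.1 _))).mp hp
  suffices hqG : q ∈ G by
    rw [hpq]
    exact add_mem (add_mem (zsmul_mem haG _) (zsmul_mem hbG _)) hqG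
  rcases le_total (Int.fract s + Int.fract t) 1 with hle | hge
  · exact AddSubgroup.subset_closure ⟨hqL, smul_add_smul_mem_of_convex_of_zero_mem hQ h0 ha.2 hb.2
      (Int.fract_nonneg s) (Int.fract_nonneg t) hle⟩
  · have hreflect : a + b - q = (1 - Int.fract s) • a + (1 - Int.fract t) • b := by
      rw [hq]
      module
    have hmem : a + b - q ∈ Q := hreflect ▸ smul_add_smul_mem_of_convex_of_zero_mem hQ h0 ha.2 hb.2
      (sub_nonneg.mpr (Int.fract_lt_one s).le) (sub_nonneg.mpr (Int.fract_lt_one t).le)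
      (by linarith)
    have hG : a + b - q ∈ G :=
      AddSubgroup.subset_closure ⟨sub_mem (add_mem ha.1 hb.1) hqL, hmem⟩
    simpa using sub_mem (add_mem haG hbG) hG

theorem closure_inter_eq_of_convex_of_finrank_eq_two (hE : finrank 𝕜 E = 2) (hQ : Convex 𝕜 Q)
    (h0 : 0 ∈ Q) (hspan : span 𝕜 ((L : Set E) ∩ Q) = ⊤) :
    AddSubgroup.closure ((L : Set E) ∩ Q) = L := by
  refine le_antisymm ((AddSubgroup.closure_le L).mpr Set.inter_subset_left) fun p hp => ?_
  have : FiniteDimensional 𝕜 E := .of_finrank_pos (by simp [hE])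
  have hbasis := exists_fun_fin_finrank_span_eq 𝕜 ((L : Set E) ∩ Q)
  rw [hspan, finrank_top, hE] at hbasis
  obtain ⟨v, hv, hvspan, -⟩ := hbasis
  obtain ⟨c, rfl⟩ := (mem_span_range_iff_exists_fun 𝕜 (x := p)).mp (hvspan ▸ mem_top)
  rw [Fin.sum_univ_two] at hp ⊢
  exact smul_add_smul_mem_closure_inter hQ h0 (hv 0) (hv 1) hp

theorem reflexive_polygon_boundary_generates_general [TopologicalSpace E] (hE : finrank 𝕜 E = 2)
    (hQ : Convex 𝕜 Q) (h0 : 0 ∈ Q) (hspan : span 𝕜 ((L : Set E) ∩ Q) = ⊤)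
    (hint : ∀ x ∈ L, x ∈ interior Q → x = 0) :
    AddSubgroup.closure ((L : Set E) ∩ frontier Q) = L := by
  set G := AddSubgroup.closure ((L : Set E) ∩ frontier Q)
  have hLQ : (L : Set E) ∩ Q ⊆ G := by
    rintro x ⟨hxL, hxQ⟩
    by_cases hx : x ∈ interior Q
    · exact hint x hxL hx ▸ zero_mem G
    · exact AddSubgroup.subset_closure ⟨hxL, subset_closure hxQ, hx⟩
  refine le_antisymm ((AddSubgroup.closure_le L).mpr Set.inter_subset_left) ?_
  calc L = AddSubgroup.closure ((L : Set E) ∩ Q) :=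
        (closure_inter_eq_of_convex_of_finrank_eq_two hE hQ h0 hspan).symm
    _ ≤ G := (AddSubgroup.closure_le G).mpr hLQ

end Plane

section LatticePolytope

variable {n : ℕ} {P : Set (Fin n → ℝ)} {x y : Fin n → ℝ}

lemma dotProd_eq_dotProduct (x y : Fin n → ℝ) : dotProd x y = x ⬝ᵥ y := rfl

lemma mem_latticeSubgroup : x ∈ latticeSubgroup n ↔ IsLatticePt x := by
  have hpi : {x : Fin n → ℝ | IsLatticePt x} =
      (AddSubgroup.pi Set.univ fun _ => .zmultiples (1 : ℝ) : AddSubgroup (Fin n → ℝ)) := by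
    ext x
    simp [IsLatticePt, AddSubgroup.mem_pi, AddSubgroup.mem_zmultiples_iff, eq_comm]
  rw [latticeSubgroup, hpi, AddSubgroup.closure_eq, ← SetLike.mem_coe, ← hpi, Set.mem_ofPred_eq]

lemma IsLatticePt.exists_dotProd_eq_intCast_s9 (hx : IsLatticePt x) (hy : IsLatticePt y) :
    ∃ k : ℤ, dotProd x y = k := by
  choose a ha using hx
  choose b hb using hy
  exact ⟨∑ i, a i * b i, by simp [dotProd, ha, hb]⟩

lemma IsLatticePolytope.convex (hP : IsLatticePolytope P) : Convex ℝ P := by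
  obtain ⟨V, -, -, rfl⟩ := hP
  exact convex_convexHull ℝ V

lemma IsLatticePolytope.isCompact (hP : IsLatticePolytope P) : IsCompact P := by
  obtain ⟨V, hV, -, rfl⟩ := hP
  exact hV.isCompact_convexHull ℝ

lemma IsLatticePolytope.convexHull_latticeSubgroup_inter (hP : IsLatticePolytope P) :
    convexHull ℝ ((latticeSubgroup n : Set (Fin n → ℝ)) ∩ P) = P := by
  refine (convexHull_min Set.inter_subset_right hP.convex).antisymm ?_
  obtain ⟨V, -, hV, rfl⟩ := hP
  exact convexHull_mono fun v hv => ⟨mem_latticeSubgroup.mpr (hV v hv), subset_convexHull ℝ V hv⟩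

lemma IsLatticePolytope.span_latticeSubgroup_inter_eq_top (hP : IsLatticePolytope P)
    (hint : (interior P).Nonempty) :
    span ℝ ((latticeSubgroup n : Set (Fin n → ℝ)) ∩ P) = ⊤ := by
  rw [← hP.convexHull_latticeSubgroup_inter,
    interior_convexHull_nonempty_iff_affineSpan_eq_top] at hint
  refine eq_top_iff.mpr fun x _ => ?_
  exact affineSpan_le_toAffineSubspace_span (hint ▸ AffineSubspace.mem_top ℝ _ x)

lemma neg_one_lt_dotProd_of_mem_interior (hx : x ∈ interior P) (hy : y ∈ dualPolytope P) :
    -1 < dotProd x y := by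
  have hnhds : ∀ᶠ t : ℝ in 𝓝 1, t • x ∈ P := by
    have hcont : ContinuousAt (fun t : ℝ => t • x) 1 := by fun_prop
    exact hcont.eventually_mem (by simpa using mem_interior_iff_mem_nhds.mp hx)
  obtain ⟨t, ht, htP⟩ := hnhds.exists_gt
  have hscaled : -1 ≤ t * dotProd x y := by
    simpa [dotProd_eq_dotProduct] using hy _ htP
  nlinarith

lemma exists_pos_smul_mem_dualPolytope (hP : Bornology.IsBounded P) (x : Fin n → ℝ) :
    ∃ t : ℝ, 0 < t ∧ t • x ∈ dualPolytope P := by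
  have hcont : Continuous fun y => dotProd y x := by unfold dotProd; fun_prop
  obtain ⟨c, hc⟩ := (hP.isCompact_closure.image hcont).bddBelow
  have hpos : 0 < 1 + |c| := by positivity
  refine ⟨(1 + |c|)⁻¹, inv_pos.mpr hpos, fun y hy => ?_⟩
  have hbound : -(1 + |c|) ≤ dotProd y x := by
    linarith [neg_abs_le c, hc (Set.mem_image_of_mem _ (subset_closure hy))]
  calc -1 = (1 + |c|)⁻¹ * -(1 + |c|) := by field_simp
    _ ≤ (1 + |c|)⁻¹ * dotProd y x := by gcongr
    _ = dotProd y ((1 + |c|)⁻¹ • x) := by simp [dotProd_eq_dotProduct]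

lemma IsLatticePt.dotProd_nonneg_of_mem_interior (hx : IsLatticePt x) (hxP : x ∈ interior P)
    (hdual : IsLatticePolytope (dualPolytope P)) (hy : y ∈ dualPolytope P) : 0 ≤ dotProd x y := by
  have hlattice : (latticeSubgroup n : Set (Fin n → ℝ)) ∩ dualPolytope P ⊆
      {w | 0 ≤ dotProd x w} := by
    rintro w ⟨hw, hwP⟩
    obtain ⟨k, hk⟩ := hx.exists_dotProd_eq_intCast_s9 (mem_latticeSubgroup.mp hw)
    have hlt : (-1 : ℝ) < k := hk ▸ neg_one_lt_dotProd_of_mem_interior hxP hwP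
    have hnonneg : 0 ≤ k := Int.lt_iff_add_one_le.mp (by exact_mod_cast hlt)
    simpa only [Set.mem_ofPred_eq, hk] using Int.cast_nonneg hnonneg
  have hhalfspace : Convex ℝ {w | 0 ≤ dotProd x w} :=
    convex_halfSpace_ge ⟨dotProduct_add x, fun c => dotProduct_smul c x⟩ 0
  rw [← hdual.convexHull_latticeSubgroup_inter] at hy
  exact convexHull_min hlattice hhalfspace hy

theorem IsLatticePt.eq_zero_of_mem_interior (hx : IsLatticePt x) (hxP : x ∈ interior P)
    (hP : Bornology.IsBounded P) (hdual : IsLatticePolytope (dualPolytope P)) : x = 0 := by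
  obtain ⟨t, ht, hmem⟩ := exists_pos_smul_mem_dualPolytope hP (-x)
  have hnonneg : 0 ≤ t * -(x ⬝ᵥ x) := by
    simpa [dotProd_eq_dotProduct] using hx.dotProd_nonneg_of_mem_interior hxP hdual hmem
  have hself : 0 ≤ x ⬝ᵥ x := by simpa using dotProduct_self_star_nonneg x
  exact dotProduct_self_eq_zero.mp (by nlinarith)

end LatticePolytope

/-- For a reflexive polygon `Q ⊆ ℝ²`, the lattice points on the boundary of `Q` generate
the full lattice `ℤ²`: `Λ₁ = ℤ²`. -/
theorem reflexive_polygon_boundary_generates (Q : Set (Fin 2 → ℝ)) (hQ : IsReflexive Q) :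
    AddSubgroup.closure {x : Fin 2 → ℝ | IsLatticePt x ∧ x ∈ frontier Q} =
      latticeSubgroup 2 := by
  simp only [← mem_latticeSubgroup]
  exact reflexive_polygon_boundary_generates_general (finrank_fin_fun ℝ) hQ.1.convex
    (interior_subset hQ.2.1) (hQ.1.span_latticeSubgroup_inter_eq_top ⟨0, hQ.2.1⟩) fun x hx hxQ =>
      (mem_latticeSubgroup.mp hx).eq_zero_of_mem_interior hxQ hQ.1.isCompact.isBounded hQ.2.2
end
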